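/- arXiv:2605.26034 — 3 statements merged into one kernel-verified Lean document; each statement's English description precedes it below -/
import Mathlib

section
/- Let q, k, n be integers with q ≥ 1 and k ≥ n ≥ 1, and let Δ ≥ 1 be a real number. Let c be a function from subsets of {1,…,q} to the natural numbers such that: (i) c(Γ) ≥ 1 for every nonempty subset Γ; (ii) c(Γ₁ ∪ Γ₂) ≤ c(Γ₁) + c(Γ₂) for all subsets Γ₁, Γ₂; (iii) #Γ ≤ Δ·(k − n + c(Γ)) for every nonempty subset Γ. Then there exists a subset Γ of {1,…,q} such that #Γ ≥ q − Δ·(k − ⌈n/2⌉) and such that for every nonempty subset Γ′ of Γ one has #Γ′ ≤ ((2k − n + 1)/(n + 1))·Δ·c(Γ′). -/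
/-!
Write `κ = (2k - n + 1) / (n + 1) * Δ` and call `Γ` overloaded if `κ * c Γ < #Γ`. Subadditivity of
`c` makes disjoint unions of overloaded sets overloaded, so nothing overloaded is disjoint from a
maximal overloaded set `U`, and it suffices to discard `U`. Since `#U ≤ Δ * (k - n + c U)`,
overloading forces `2 * c U < n + 1`, hence `c U ≤ n - ⌈n / 2⌉` by integrality, and the same upper
bound on `#U` gives `#U ≤ Δ * (k - ⌈n / 2⌉)`.
-/

theorem exists_forall_disjoint_not_of_sup_closed {α : Type*} [SemilatticeSup α] [OrderBot α]
    [WellFoundedGT α] {p : α → Prop} (hp : ∀ a b, Disjoint a b → p a → p b → p (a ⊔ b)) :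
    ∃ a, (a ≠ ⊥ → p a) ∧ ∀ b, Disjoint a b → b ≠ ⊥ → ¬ p b := by
  obtain ⟨a, ha⟩ := exists_maximal_of_wellFoundedGT (fun a : α ↦ a ≠ ⊥ → p a) ⟨⊥, by simp⟩
  refine ⟨a, ha.prop, fun b hab hb hpb ↦ hb ?_⟩
  have p_sup : p (a ⊔ b) := by
    obtain rfl | ha_ne := eq_or_ne a ⊥
    · rwa [bot_sup_eq]
    · exact hp a b hab (ha.prop ha_ne) hpb
  have b_le_a : b ≤ a := le_sup_right.trans (ha.le_of_ge (fun _ ↦ p_sup) le_sup_left)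
  exact hab.symm.eq_bot_of_le b_le_a

theorem exists_forall_disjoint_card_le_mul {ι R : Type*} [Finite ι] [DecidableEq ι]
    [Semiring R] [LinearOrder R] [IsStrictOrderedRing R] {κ : R} (hκ : 0 ≤ κ) {c : Finset ι → R}
    (hc : ∀ U V, Disjoint U V → c (U ∪ V) ≤ c U + c V) :
    ∃ U : Finset ι, (U.Nonempty → κ * c U < U.card) ∧
      ∀ V : Finset ι, Disjoint U V → V.Nonempty → V.card ≤ κ * c V := by
  have overloaded_union (U V : Finset ι) (hUV : Disjoint U V) (hU : κ * c U < U.card)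
      (hV : κ * c V < V.card) : κ * c (U ∪ V) < (U ∪ V).card :=
    calc κ * c (U ∪ V) ≤ κ * (c U + c V) := mul_le_mul_of_nonneg_left (hc U V hUV) hκ
      _ = κ * c U + κ * c V := mul_add ..
      _ < U.card + V.card := add_lt_add hU hV
      _ = (U ∪ V).card := by rw [Finset.card_union_of_disjoint hUV, Nat.cast_add]
  simpa only [Finset.bot_eq_empty, ← Finset.nonempty_iff_ne_empty, not_lt] using
    exists_forall_disjoint_not_of_sup_closed overloaded_union

section OrderedField

variable {𝕜 : Type*} [Field 𝕜] [LinearOrder 𝕜] [IsStrictOrderedRing 𝕜]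

theorem add_le_two_mul_add_div_mul {d m x : 𝕜} (hd : 0 ≤ d) (hm : 0 < m) (hx : m ≤ 2 * x) :
    d + x ≤ (2 * d + m) / m * x := by
  rw [div_mul_eq_mul_div, le_div_iff₀ hm]
  linear_combination d * hx

theorem intCast_le_sub_ceil_half [FloorRing 𝕜] {a n : ℤ} (h : 2 * a ≤ n) :
    (a : 𝕜) ≤ n - ⌈(n : 𝕜) / 2⌉ := by
  have h_cast : 2 * (a : 𝕜) ≤ n := mod_cast h
  have ceil_le : ⌈(n : 𝕜) / 2⌉ ≤ n - a := by
    rw [Int.ceil_le, Int.cast_sub]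
    linarith
  exact_mod_cast le_sub_comm.mp ceil_le

theorem two_mul_le_of_div_mul_lt {n a : ℕ} {k Δ : 𝕜} (hkn : n ≤ k) (hΔ : 0 ≤ Δ)
    (hlt : (2 * k - n + 1) / (n + 1) * Δ * a < Δ * (k - n + a)) : 2 * a ≤ n := by
  contrapose! hlt
  have h_cast : (n : 𝕜) + 1 ≤ 2 * a := mod_cast hlt
  calc Δ * (k - n + a) ≤ Δ * ((2 * (k - n) + (n + 1)) / (n + 1) * a) :=
        mul_le_mul_of_nonneg_left
          (add_le_two_mul_add_div_mul (sub_nonneg.mpr hkn) n.cast_add_one_pos h_cast) hΔ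
    _ = (2 * k - n + 1) / (n + 1) * Δ * a := by ring

end OrderedField

theorem stmt_0_general {ι : Type*} [Fintype ι] [DecidableEq ι] {n : ℕ} {k Δ : ℝ} (hkn : n ≤ k)
    (hΔ : 0 ≤ Δ) {c : Finset ι → ℕ} (hsub : ∀ U V, Disjoint U V → c (U ∪ V) ≤ c U + c V)
    (hdist : ∀ U : Finset ι, U.Nonempty → U.card ≤ Δ * (k - n + c U)) :
    ∃ Γ : Finset ι, Fintype.card ι - Δ * (k - ⌈(n : ℝ) / 2⌉) ≤ Γ.card ∧
      ∀ Γ' ⊆ Γ, Γ'.Nonempty → Γ'.card ≤ (2 * k - n + 1) / (n + 1) * Δ * c Γ' := by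
  have ratio_nonneg : 0 ≤ (2 * k - n + 1) / (n + 1) :=
    div_nonneg (by linarith [n.cast_nonneg (α := ℝ)]) n.cast_add_one_pos.le
  obtain ⟨U, U_overloaded, forall_disjoint⟩ := exists_forall_disjoint_card_le_mul
    (mul_nonneg ratio_nonneg hΔ) (c := fun Γ ↦ (c Γ : ℝ)) fun V W h ↦ mod_cast hsub V W h
  have mul_le_bound {a : ℕ} (ha : 2 * a ≤ n) :
      Δ * (k - n + a) ≤ Δ * (k - ⌈(n : ℝ) / 2⌉) := by
    have a_le := intCast_le_sub_ceil_half (𝕜 := ℝ) (a := a) (n := n) (mod_cast ha)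
    push_cast at a_le
    exact mul_le_mul_of_nonneg_left (by linarith) hΔ
  have card_U_le : U.card ≤ Δ * (k - ⌈(n : ℝ) / 2⌉) := by
    obtain rfl | hU := U.eq_empty_or_nonempty
    · have bound_nonneg : 0 ≤ Δ * (k - n + (0 : ℕ)) := mul_nonneg hΔ (by simpa using hkn)
      simpa only [Finset.card_empty, Nat.cast_zero] using
        bound_nonneg.trans (mul_le_bound n.zero_le)
    · have two_mul_c_le : 2 * c U ≤ n :=
        two_mul_le_of_div_mul_lt hkn hΔ ((U_overloaded hU).trans_le (hdist U hU))
      exact (hdist U hU).trans (mul_le_bound two_mul_c_le)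
  refine ⟨Uᶜ, ?_, fun V hV ↦ forall_disjoint V (Finset.subset_compl_iff_disjoint_left.mp hV)⟩
  rw [Finset.card_compl, Nat.cast_sub U.card_le_univ]
  exact sub_le_sub_left card_U_le _

/-- Combinatorial core of Lemma 4.1: reducing the distributive constant
by discarding at most `Δ·(k − ⌈n/2⌉)` indices. -/
theorem stmt_0 (q k n : ℕ) (hq : 1 ≤ q) (hn : 1 ≤ n) (hkn : n ≤ k)
    (Δ : ℝ) (hΔ : 1 ≤ Δ)
    (c : Finset (Fin q) → ℕ)
    (hpos : ∀ Γ : Finset (Fin q), Γ.Nonempty → 1 ≤ c Γ)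
    (hsub : ∀ Γ₁ Γ₂ : Finset (Fin q), c (Γ₁ ∪ Γ₂) ≤ c Γ₁ + c Γ₂)
    (hdist : ∀ Γ : Finset (Fin q), Γ.Nonempty →
      (Γ.card : ℝ) ≤ Δ * ((k : ℝ) - n + c Γ)) :
    ∃ Γ : Finset (Fin q),
      (q : ℝ) - Δ * ((k : ℝ) - ⌈(n : ℝ) / 2⌉) ≤ (Γ.card : ℝ) ∧
      ∀ Γ' : Finset (Fin q), Γ' ⊆ Γ → Γ'.Nonempty →
        (Γ'.card : ℝ) ≤ ((2 * (k : ℝ) - n + 1) / ((n : ℝ) + 1)) * Δ * c Γ' := by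
  simpa only [Fintype.card_fin] using
    stmt_0_general (Nat.cast_le.mpr hkn) (zero_le_one.trans hΔ) (fun U V _ ↦ hsub U V) hdist
end

section
/- Let q, k, n, N be integers with q ≥ 1, k ≥ n ≥ 1 and N ≥ k. Let c be a function from subsets of {1,…,q} to the natural numbers such that: (i) c(Γ) ≥ 1 for every nonempty subset Γ; (ii) c(Γ₁ ∪ Γ₂) ≤ c(Γ₁) + c(Γ₂) for all subsets Γ₁, Γ₂; (iii) #Γ ≤ N − n + c(Γ) for every nonempty subset Γ. Then there exists a subset Γ of {1,…,q} such that #Γ ≥ q − N + ⌈n/2⌉ and such that for every nonempty subset Γ′ of Γ one has #Γ′ ≤ ((2N − n + 1)/(n + 1))·c(Γ′). -/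
/-!
Write `d = (2N - n + 1)/(n + 1)` and call `s` overweight if `#s > d * c s`. Subadditivity of `c`
makes a disjoint union of overweight sets overweight, so the complement of a maximal overweight
set `B` contains no nonempty overweight set. It remains to bound `#B`: eliminating `c B` between
`d * c B < #B` and `#B ≤ N - n + c B` gives `(d - 1) * #B < d * (N - n)`, and since
`d - 1 = 2 (N - n)/(n + 1)` the factor `N - n` cancels, leaving `2 * #B < 2N - n + 1`.
-/

open scoped Finset

theorem exists_forall_subset_compl_not_of_disjoint_union {ι : Type*} [Fintype ι] [DecidableEq ι]
    {P : Finset ι → Prop} (hP : ∀ s t, Disjoint s t → P s → P t → P (s ∪ t)) :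
    ∃ B : Finset ι, (B = ∅ ∨ P B) ∧ ∀ t ⊆ Bᶜ, t.Nonempty → ¬ P t := by
  obtain ⟨B, hB⟩ := (Set.toFinite {s : Finset ι | s = ∅ ∨ P s}).exists_maximal ⟨∅, .inl rfl⟩
  refine ⟨B, hB.prop, fun t htB ht hPt ↦ ?_⟩
  have hdisj : Disjoint B t := Finset.subset_compl_iff_disjoint_left.mp htB
  have hunion : P (B ∪ t) := by
    rcases hB.prop with rfl | hPB
    · rwa [Finset.empty_union]
    · exact hP B t hdisj hPB hPt
  have htB' : t ⊆ B :=
    Finset.subset_union_right.trans (hB.le_of_ge (.inr hunion) Finset.subset_union_left)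
  exact ht.ne_empty (hdisj.eq_bot_of_ge htB')

/-- The set `s` violates the bound `d` on the distributive constant `max #s / c s` of the weight
`c`. The ratio is cleared of its denominator, so that a set with `c s = 0` is overweight as soon as
it is nonempty. -/
def IsOverweight {ι K : Type*} [Semiring K] [LT K] (c : Finset ι → K) (d : K) (s : Finset ι) :
    Prop :=
  d * c s < #s

namespace IsOverweight

theorem union {ι K : Type*} [DecidableEq ι] [Semiring K] [PartialOrder K]
    [IsStrictOrderedRing K] {c : Finset ι → K} {d : K} {s t : Finset ι} (hs : IsOverweight c d s)
    (ht : IsOverweight c d t) (hd : 0 ≤ d) (hst : Disjoint s t) (hc : c (s ∪ t) ≤ c s + c t) :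
    IsOverweight c d (s ∪ t) :=
  calc d * c (s ∪ t)
    _ ≤ d * (c s + c t) := mul_le_mul_of_nonneg_left hc hd
    _ = d * c s + d * c t := mul_add ..
    _ < #s + #t := add_lt_add hs ht
    _ = #(s ∪ t) := by rw [Finset.card_union_of_disjoint hst, Nat.cast_add]

theorem two_mul_card_lt {ι K : Type*} [Field K] [LinearOrder K] [IsStrictOrderedRing K]
    {c : Finset ι → K} {s : Finset ι} {n N : K} (hn : -1 < n) (hnN : n ≤ N)
    (hs : IsOverweight c ((2 * N - n + 1) / (n + 1)) s) (hc : #s ≤ N - n + c s) :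
    2 * (#s : K) < 2 * N - n + 1 := by
  have hcleared : (2 * N - n + 1) * c s < #s * (n + 1) := by
    rwa [IsOverweight, div_mul_eq_mul_div, div_lt_iff₀ (by linarith)] at hs
  have helim : (2 * N - n + 1) * (#s - (N - n)) ≤ (2 * N - n + 1) * c s :=
    mul_le_mul_of_nonneg_left (by linarith) (by linarith)
  have hscaled : (N - n) * (2 * #s) < (N - n) * (2 * N - n + 1) := by linarith
  exact lt_of_mul_lt_mul_left hscaled (sub_nonneg.mpr hnN)

end IsOverweight

theorem stmt_1_general {ι : Type*} [Fintype ι] [DecidableEq ι] {n N : ℕ} (hnN : n ≤ N)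
    (c : Finset ι → ℝ) (hsub : ∀ s t, Disjoint s t → c (s ∪ t) ≤ c s + c t)
    (hsubgen : ∀ s : Finset ι, s.Nonempty → (#s : ℝ) ≤ N - n + c s) :
    ∃ Γ : Finset ι, (Fintype.card ι : ℝ) - N + ⌈(n : ℝ) / 2⌉ ≤ #Γ ∧
      ∀ s ⊆ Γ, s.Nonempty → (#s : ℝ) ≤ (2 * N - n + 1) / (n + 1) * c s := by
  have hnN' : (n : ℝ) ≤ N := mod_cast hnN
  have hd : (0 : ℝ) ≤ (2 * N - n + 1) / (n + 1) := div_nonneg (by linarith) (by positivity)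
  obtain ⟨B, hB, hBmax⟩ := exists_forall_subset_compl_not_of_disjoint_union
    fun s t hst hs ht ↦ IsOverweight.union hs ht hd hst (hsub s t hst)
  have hcard : 2 * (#B : ℝ) < 2 * N - n + 1 := by
    rcases B.eq_empty_or_nonempty with rfl | hne
    · rw [Finset.card_empty, Nat.cast_zero]
      linarith
    · exact (hB.resolve_left hne.ne_empty).two_mul_card_lt
        (neg_one_lt_zero.trans_le n.cast_nonneg) hnN' (hsubgen B hne)
  have hcard_nat : 2 * #B + n ≤ 2 * N := by
    have : 2 * (#B : ℝ) + n < 2 * N + 1 := by linarith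
    exact Nat.le_of_lt_succ (mod_cast this)
  have hceil : ⌈(n : ℝ) / 2⌉ ≤ (N : ℤ) - #B := by
    have : 2 * (#B : ℝ) + n ≤ 2 * N := mod_cast hcard_nat
    rw [Int.ceil_le]
    push_cast
    linarith
  refine ⟨Bᶜ, ?_, fun s hs hne ↦ not_lt.mp (hBmax s hs hne)⟩
  have hceil' : (⌈(n : ℝ) / 2⌉ : ℝ) ≤ N - #B := mod_cast hceil
  rw [Finset.card_compl, Nat.cast_sub B.card_le_univ]
  linarith

/-- Combinatorial core of Lemma 4.2: the `N`-subgeneral position case. -/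
theorem stmt_1 (q k n N : ℕ) (hq : 1 ≤ q) (hn : 1 ≤ n) (hkn : n ≤ k) (hNk : k ≤ N)
    (c : Finset (Fin q) → ℕ)
    (hpos : ∀ Γ : Finset (Fin q), Γ.Nonempty → 1 ≤ c Γ)
    (hsub : ∀ Γ₁ Γ₂ : Finset (Fin q), c (Γ₁ ∪ Γ₂) ≤ c Γ₁ + c Γ₂)
    (hsubgen : ∀ Γ : Finset (Fin q), Γ.Nonempty →
      (Γ.card : ℝ) ≤ (N : ℝ) - n + c Γ) :
    ∃ Γ : Finset (Fin q),
      (q : ℝ) - N + ⌈(n : ℝ) / 2⌉ ≤ (Γ.card : ℝ) ∧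
      ∀ Γ' : Finset (Fin q), Γ' ⊆ Γ → Γ'.Nonempty →
        (Γ'.card : ℝ) ≤ ((2 * (N : ℝ) - n + 1) / ((n : ℝ) + 1)) * c Γ' := by
  simpa only [Fintype.card_fin] using stmt_1_general (hkn.trans hNk) (fun Γ ↦ (c Γ : ℝ))
    (fun Γ₁ Γ₂ _ ↦ mod_cast hsub Γ₁ Γ₂) hsubgen
end

section
/- Let q ≥ 1 be an integer, let M > 0 be a real number, and let c be a function from subsets of {1,…,q} to the natural numbers satisfying c(Γ₁ ∪ Γ₂) ≤ c(Γ₁) + c(Γ₂) for all subsets Γ₁, Γ₂. Define S to be the family of all nonempty subsets Γ of {1,…,q} with #Γ > M·c(Γ). If Γ₁ ∈ S has maximal cardinality among all members of S, then Γ₁ ∩ Γ₂ ≠ ∅ for every Γ₂ ∈ S. -/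
/-!
The family of bad sets is closed under disjoint unions, because cardinality is additive on disjoint
sets while `c` is subadditive. A bad set disjoint from a maximal one could therefore be adjoined
to it, contradicting maximality.
-/

open Finset

theorem not_disjoint_of_maximal {α : Type*} [SemilatticeSup α] [OrderBot α] {P : α → Prop}
    {a b : α} (hsup : Disjoint a b → P (a ⊔ b)) (ha : Maximal P a) (hb : b ≠ ⊥) :
    ¬Disjoint a b := by
  intro hab
  have hba : b ≤ a := le_sup_right.trans (ha.le_of_ge (hsup hab) le_sup_left)
  exact hb (hab.symm.eq_bot_of_le hba)

theorem maximal_of_forall_card_le {α : Type*} {P : Finset α → Prop} {s : Finset α} (hs : P s)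
    (hcard : ∀ t, P t → #t ≤ #s) : Maximal P s :=
  ⟨hs, fun t ht hst ↦ (eq_of_subset_of_card_le hst (hcard t ht)).ge⟩

section IsBad

variable {α R : Type*} [Semiring R] [PartialOrder R]

/-- The "bad" sets of the paper: nonempty finite sets whose cardinality exceeds `M` times their
codimension `c`. The codimension takes values in the semiring `R` of `M`, so that a `ℕ`-valued one
is used through its cast. -/
def IsBad (M : R) (c : Finset α → R) (s : Finset α) : Prop :=
  s.Nonempty ∧ M * c s < #s

variable [IsStrictOrderedRing R] [DecidableEq α] {M : R} {c : Finset α → R} {s t : Finset α}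

theorem IsBad.union_of_disjoint (hM : 0 ≤ M) (hc : c (s ∪ t) ≤ c s + c t) (hst : Disjoint s t)
    (hs : IsBad M c s) (ht : IsBad M c t) : IsBad M c (s ∪ t) := by
  refine ⟨hs.1.mono subset_union_left, ?_⟩
  calc
    M * c (s ∪ t) ≤ M * (c s + c t) := mul_le_mul_of_nonneg_left hc hM
    _ = M * c s + M * c t := mul_add _ _ _
    _ < #s + #t := add_lt_add hs.2 ht.2
    _ = #(s ∪ t) := by rw [card_union_of_disjoint hst, Nat.cast_add]

theorem stmt_2_general (hM : 0 ≤ M) (hc : ∀ s t, Disjoint s t → c (s ∪ t) ≤ c s + c t)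
    (hs : Maximal (IsBad M c) s) (ht : IsBad M c t) : (s ∩ t).Nonempty :=
  not_disjoint_iff_nonempty_inter.1 <| not_disjoint_of_maximal
    (fun hst ↦ hs.prop.union_of_disjoint hM (hc s t hst) hst ht) hs ht.1.ne_empty

end IsBad

/-- The Claim in the proof of Lemma 4.1: a maximal-cardinality "bad" set
meets every other "bad" set. -/
theorem stmt_2 (q : ℕ) (hq : 1 ≤ q) (M : ℝ) (hM : 0 < M)
    (c : Finset (Fin q) → ℕ)
    (hsub : ∀ Γ₁ Γ₂ : Finset (Fin q), c (Γ₁ ∪ Γ₂) ≤ c Γ₁ + c Γ₂)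
    (S : Set (Finset (Fin q)))
    (hS : S = {Γ : Finset (Fin q) | Γ.Nonempty ∧ M * c Γ < (Γ.card : ℝ)})
    (Γ₁ : Finset (Fin q)) (hΓ₁ : Γ₁ ∈ S)
    (hmax : ∀ Γ ∈ S, Γ.card ≤ Γ₁.card) :
    ∀ Γ₂ ∈ S, (Γ₁ ∩ Γ₂).Nonempty := by
  subst hS
  exact fun Γ₂ hΓ₂ ↦ stmt_2_general (c := fun Γ ↦ (c Γ : ℝ)) hM.le
    (fun s t _ ↦ mod_cast hsub s t) (maximal_of_forall_card_le hΓ₁ hmax) hΓ₂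
end
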